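/- Let I ⊆ ℝ be a Borel set, and regard L²(I) as the closed subspace χ_I(M)L²(ℝ) of L²(ℝ). Let E be a positive operator measure on the Borel sets of ℝ with values in the bounded operators on L²(I), satisfying the covariance condition e^{-iaM} E(B) e^{iaM} = E(B+a) for all Borel B ⊆ ℝ and all a ∈ ℝ, where e^{-iaM} denotes multiplication by x ↦ e^{-iax}. Then there exists a positive linear map Ψ from the bounded operators on L²(ℝ) to the bounded operators on L²(I) such that Ψ(f(M)* A f(M)) = f(M)* Ψ(A) f(M) for every bounded Borel function f : ℝ → ℂ and every bounded operator A on L²(ℝ), and E(B) = Ψ(F χ_B(M) F*) for every Borel set B ⊆ ℝ. -/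

import Mathlib

open MeasureTheory Complex Filter Set
open scoped ENNReal NNReal

noncomputable section

/-- `L²(ℝ)` with respect to Lebesgue measure. -/
abbrev H2 : Type := Lp ℂ 2 (volume : Measure ℝ)

/-- `𝓕` is the Fourier–Plancherel operator: a unitary on `L²(ℝ)` which is given on
`L¹ ∩ L²` by the usual integral formula `(𝓕φ)(y) = (2π)^{-1/2} ∫ e^{-iyx} φ(x) dx`, and whose
inverse `𝓕* = 𝓕⁻¹` is given on `L¹ ∩ L²` by `(𝓕*φ)(y) = (2π)^{-1/2} ∫ e^{iyx} φ(x) dx`. -/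
def IsFourier (𝓕 : H2 ≃ₗᵢ[ℂ] H2) : Prop :=
  (∀ φ : H2, Integrable (⇑φ) volume →
      (⇑(𝓕 φ) : ℝ → ℂ) =ᵐ[volume]
        fun y : ℝ => (Real.sqrt (2 * Real.pi) : ℂ)⁻¹ *
          ∫ x : ℝ, Complex.exp (-(Complex.I * y * x)) * φ x) ∧
  (∀ φ : H2, Integrable (⇑φ) volume →
      (⇑(𝓕.symm φ) : ℝ → ℂ) =ᵐ[volume]
        fun y : ℝ => (Real.sqrt (2 * Real.pi) : ℂ)⁻¹ *
          ∫ x : ℝ, Complex.exp (Complex.I * y * x) * φ x)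

/-- The multiplication operator `g(M)` on `L²`: `φ ↦ g·φ` (pointwise product), defined
whenever the product is again in `L²`. -/
def mulLp {μ : Measure ℝ} (g : ℝ → ℂ) (φ : Lp ℂ 2 μ) : Lp ℂ 2 μ := by
  classical exact if h : MemLp (fun x => g x * φ x) 2 μ then h.toLp _ else 0

/-- A positive operator measure (POM) on the Borel sets of `ℝ` with values in the bounded
operators on a Hilbert space `K`: `0 ≤ E(B) ≤ I`, `E(∅) = 0`, and `E` is σ-additive in the
strong operator topology. -/
structure POM (K : Type) [NormedAddCommGroup K] [InnerProductSpace ℂ K] [CompleteSpace K] where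
  toFun : Set ℝ → K →L[ℂ] K
  pos : ∀ B : Set ℝ, (toFun B).IsPositive
  le_one : ∀ B : Set ℝ, (ContinuousLinearMap.id ℂ K - toFun B).IsPositive
  empty : toFun ∅ = 0
  sigma_additive : ∀ f : ℕ → Set ℝ, (∀ n, MeasurableSet (f n)) →
    Pairwise (Function.onFun Disjoint f) →
    ∀ φ : K, HasSum (fun n => toFun (f n) φ) (toFun (⋃ n, f n) φ)

/-!
Suppose first that `I = ℝ` and that `E` has a density, `E(B) = ∫_B e^{-iaM} T e^{iaM} da` with
`T ≥ 0`. Parseval for `√T` gives `⟪φ, E(B) φ⟫ = ∑ j, ∫_B |⟪w j, e^{iaM} φ⟫|² da` with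
`w j = √T (b j)` for an orthonormal basis `b`. The function `a ↦ ⟪w j, e^{iaM} φ⟫` is the inverse
Fourier transform of `G j φ`, where `G j` is multiplication by `√(2π) conj (w j)`, so that
`E(B) = ∑ j, (G j)* (F χ_B(M) F*) (G j)`, and `Ψ(A) = ∑ j, (G j)* A (G j)` has the required
properties because multiplication operators commute.

A general `E` on `L²(ℝ)` is the limit as `c → 0` of its averages `c⁻¹ ∫_0^c E(B + s) ds`, which by
covariance and Tonelli's theorem have the density `T = c⁻¹ E((0, c])`. The corresponding maps `Ψ`
are positive contractions, hence have a weak limit point. Finally, `L²(I)` reduces to `L²(ℝ)` by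
compressing with the restriction `L²(ℝ) → L²(I)`, which commutes with multiplications.
-/

open scoped InnerProductSpace Topology ComplexOrder InnerProduct

/-! ### Operators on Hilbert spaces -/

section HilbertSpace

universe u

variable {H : Type*} [NormedAddCommGroup H] [InnerProductSpace ℂ H]

theorem enorm_sq_eq_ofReal_norm_sq {E : Type*} [SeminormedAddGroup E] (x : E) :
    ‖x‖ₑ ^ 2 = ENNReal.ofReal (‖x‖ ^ 2) := by
  rw [ENNReal.ofReal_pow (norm_nonneg x), ofReal_norm]

theorem isPositive_iff_forall_inner_nonneg {T : H →L[ℂ] H} :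
    T.IsPositive ↔ ∀ x, 0 ≤ ⟪x, T x⟫_ℂ := by
  refine ⟨fun hT x => hT.inner_nonneg_right x, fun h => ?_⟩
  refine (ContinuousLinearMap.isPositive_iff_complex T).2 fun x => ?_
  have hx : 0 ≤ ⟪T x, x⟫_ℂ := by
    rw [← inner_conj_symm]
    exact star_nonneg_iff.2 (h x)
  exact ⟨RCLike.conj_eq_iff_re.1 (Complex.conj_eq_iff_im.2 hx.2.symm), hx.1⟩

theorem opNorm_le_of_norm_inner_le {T : H →L[ℂ] H} {C : ℝ} (hC : 0 ≤ C)
    (h : ∀ x y, ‖⟪x, T y⟫_ℂ‖ ≤ C * ‖x‖ * ‖y‖) : ‖T‖ ≤ C := by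
  refine ContinuousLinearMap.opNorm_le_of_re_inner_le (𝕜 := ℂ) hC fun x y hx hy => ?_
  calc (⟪T x, y⟫_ℂ).re ≤ ‖⟪y, T x⟫_ℂ‖ := norm_inner_symm (𝕜 := ℂ) y (T x) ▸ Complex.re_le_norm _
    _ ≤ C := by simpa only [hx, hy, mul_one] using h y x

theorem norm_inner_apply_le (T : H →L[ℂ] H) (x y : H) : ‖⟪x, T y⟫_ℂ‖ ≤ ‖T‖ * ‖x‖ * ‖y‖ :=
  calc ‖⟪x, T y⟫_ℂ‖ ≤ ‖x‖ * ‖T y‖ := norm_inner_le_norm x (T y)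
    _ ≤ ‖x‖ * (‖T‖ * ‖y‖) := by gcongr; exact T.le_opNorm y
    _ = ‖T‖ * ‖x‖ * ‖y‖ := by ring

theorem eq_of_forall_inner_self_eq {S T : H →L[ℂ] H} (h : ∀ x, ⟪x, S x⟫_ℂ = ⟪x, T x⟫_ℂ) :
    S = T := by
  refine ContinuousLinearMap.coe_injective ((ext_inner_map _ _).1 fun x => ?_)
  rw [← inner_conj_symm, ContinuousLinearMap.coe_coe, h x, inner_conj_symm]
  rfl

theorem countable_of_orthonormal [TopologicalSpace.SeparableSpace H] {ι : Type*} {v : ι → H}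
    (hv : Orthonormal ℂ v) : Countable ι := by
  have one_le_dist : ∀ i j, i ≠ j → 1 ≤ dist (v i) (v j) := by
    intro i j hij
    have hsq := norm_sub_sq (𝕜 := ℂ) (v i) (v j)
    rw [hv.1 i, hv.1 j, hv.2 hij, map_zero] at hsq
    rw [dist_eq_norm]
    nlinarith [norm_nonneg (v i - v j)]
  refine Pairwise.countable_of_isOpen_disjoint (s := fun i => Metric.ball (v i) (1 / 2))
    (fun i j hij => Metric.ball_disjoint_ball ?_) (fun _ => Metric.isOpen_ball)
    fun i => Metric.nonempty_ball.2 (by norm_num)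
  linarith [one_le_dist i j hij]

theorem tsum_enorm_inner_sq {ι : Type*} (b : HilbertBasis ι ℂ H) (x : H) :
    ∑' i, ‖⟪b i, x⟫_ℂ‖ₑ ^ 2 = ‖x‖ₑ ^ 2 := by
  have parseval : HasSum (fun i => ‖⟪b i, x⟫_ℂ‖ ^ 2) (‖x‖ ^ 2) := by
    have h := lp.hasSum_norm (p := 2) (by norm_num) (b.repr x)
    simpa only [ENNReal.toReal_ofNat, Real.rpow_ofNat, HilbertBasis.repr_apply_apply,
      LinearIsometryEquiv.norm_map] using h
  simp only [enorm_sq_eq_ofReal_norm_sq]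
  rw [← parseval.tsum_eq, ENNReal.ofReal_tsum_of_nonneg (fun _ => sq_nonneg _) parseval.summable]

variable [CompleteSpace H]

theorem tsum_enorm_inner_sqrt_sq {ι : Type*} (b : HilbertBasis ι ℂ H) {T : H →L[ℂ] H}
    (hT : T.IsPositive) (x : H) :
    ∑' i, ‖⟪CFC.sqrt T (b i), x⟫_ℂ‖ₑ ^ 2 = ENNReal.ofReal (⟪x, T x⟫_ℂ).re := by
  have sqrt_symm : ∀ x y, ⟪CFC.sqrt T x, y⟫_ℂ = ⟪x, CFC.sqrt T y⟫_ℂ :=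
    ((ContinuousLinearMap.nonneg_iff_isPositive _).1 (CFC.sqrt_nonneg T)).isSymmetric
  have sqrt_sq : CFC.sqrt T (CFC.sqrt T x) = T x :=
    congr($(CFC.sqrt_mul_sqrt_self T ((ContinuousLinearMap.nonneg_iff_isPositive T).2 hT)) x)
  simp only [sqrt_symm]
  rw [tsum_enorm_inner_sq, enorm_sq_eq_ofReal_norm_sq, ← inner_self_eq_norm_sq (𝕜 := ℂ), sqrt_symm,
    sqrt_sq]
  rfl

theorem exists_countable_tsum_enorm_inner_sq {H : Type u} [NormedAddCommGroup H]
    [InnerProductSpace ℂ H] [CompleteSpace H] [TopologicalSpace.SeparableSpace H]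
    {T : H →L[ℂ] H} (hT : T.IsPositive) :
    ∃ (ι : Type u) (_ : Countable ι) (w : ι → H),
      ∀ x, ∑' i, ‖⟪w i, x⟫_ℂ‖ₑ ^ 2 = ENNReal.ofReal (⟪x, T x⟫_ℂ).re := by
  obtain ⟨v, b, -⟩ := exists_hilbertBasis ℂ H
  exact ⟨v, countable_of_orthonormal b.orthonormal, fun i => CFC.sqrt T (b i),
    tsum_enorm_inner_sqrt_sq b hT⟩

theorem exists_forall_inner_eq (L : H → H → ℂ) (add_left : ∀ x y z, L (x + y) z = L x z + L y z)
    (smul_left : ∀ (c : ℂ) x z, L (c • x) z = starRingEnd ℂ c • L x z)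
    (add_right : ∀ x y z, L x (y + z) = L x y + L x z)
    (smul_right : ∀ (c : ℂ) x z, L x (c • z) = c • L x z)
    {C : ℝ} (bound : ∀ x y, ‖L x y‖ ≤ C * ‖x‖ * ‖y‖) :
    ∃ T : H →L[ℂ] H, ∀ x y, ⟪x, T y⟫_ℂ = L x y := by
  let form : H →L⋆[ℂ] H →L[ℂ] ℂ := LinearMap.mkContinuous₂
    (LinearMap.mk₂'ₛₗ (starRingEnd ℂ) (RingHom.id ℂ) L add_left smul_left add_right smul_right)
    C bound
  refine ⟨(InnerProductSpace.continuousLinearMapOfBilin form)†, fun x y => ?_⟩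
  rw [ContinuousLinearMap.adjoint_inner_right, InnerProductSpace.continuousLinearMapOfBilin_apply]
  rfl

theorem exists_tendsto_inner_of_norm_le {ι : Type*} (u : Ultrafilter ι) {T : ι → H →L[ℂ] H}
    {C : ℝ} (hT : ∀ i, ‖T i‖ ≤ C) :
    ∃ L : H →L[ℂ] H, ∀ x y, Tendsto (fun i => ⟪x, T i y⟫_ℂ) u (𝓝 ⟪x, L y⟫_ℂ) := by
  have inner_bound : ∀ x y i, ‖⟪x, T i y⟫_ℂ‖ ≤ C * ‖x‖ * ‖y‖ := fun x y i =>
    (norm_inner_apply_le (T i) x y).trans (by gcongr; exact hT i)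
  have exists_lim : ∀ x y, ∃ c : ℂ, ‖c‖ ≤ C * ‖x‖ * ‖y‖ ∧
      Tendsto (fun i => ⟪x, T i y⟫_ℂ) u (𝓝 c) := fun x y => by
    obtain ⟨c, hc, hlim⟩ := (isCompact_closedBall (0 : ℂ) (C * ‖x‖ * ‖y‖)).ultrafilter_le_nhds'
      (u.map fun i => ⟪x, T i y⟫_ℂ)
      (univ_mem' (f := (u : Filter ι)) fun i => mem_closedBall_zero_iff.2 (inner_bound x y i))
    exact ⟨c, mem_closedBall_zero_iff.1 hc, hlim⟩
  choose L norm_L_le hL using exists_lim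
  obtain ⟨T', hT'⟩ := exists_forall_inner_eq L
    (fun x y z => tendsto_nhds_unique (hL _ _) <| by
      simpa only [inner_add_left] using (hL x z).add (hL y z))
    (fun c x z => tendsto_nhds_unique (hL _ _) <| by
      simpa only [inner_smul_left, smul_eq_mul] using (hL x z).const_mul _)
    (fun x y z => tendsto_nhds_unique (hL _ _) <| by
      simpa only [map_add, inner_add_right] using (hL x y).add (hL x z))
    (fun c x z => tendsto_nhds_unique (hL _ _) <| by
      simpa only [map_smul, inner_smul_right, smul_eq_mul] using (hL x z).const_mul _)
    norm_L_le
  exact ⟨T', fun x y => hT' x y ▸ hL x y⟩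

theorem exists_linearMap_tendsto_inner {ι V : Type*} [AddCommGroup V] [Module ℂ V]
    (u : Ultrafilter ι) {Φ : ι → V →ₗ[ℂ] H →L[ℂ] H} {C : V → ℝ} (hΦ : ∀ i v, ‖Φ i v‖ ≤ C v) :
    ∃ Ψ : V →ₗ[ℂ] H →L[ℂ] H, ∀ v x y,
      Tendsto (fun i => ⟪x, Φ i v y⟫_ℂ) u (𝓝 ⟪x, Ψ v y⟫_ℂ) := by
  choose Ψ hΨ using fun v => exists_tendsto_inner_of_norm_le u fun i => hΦ i v
  refine ⟨⟨⟨Ψ, fun v w => ?_⟩, fun c v => ?_⟩, hΨ⟩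
  · refine ContinuousLinearMap.ext fun y => ext_inner_left ℂ fun x => ?_
    refine tendsto_nhds_unique (hΨ (v + w) x y) ?_
    simpa only [map_add, _root_.add_apply, inner_add_right] using (hΨ v x y).add (hΨ w x y)
  · refine ContinuousLinearMap.ext fun y => ext_inner_left ℂ fun x => ?_
    refine tendsto_nhds_unique (hΨ (c • v) x y) ?_
    simpa only [map_smul, RingHom.id_apply, _root_.smul_apply, inner_smul_right] using
      (hΨ v x y).const_mul c

end HilbertSpace

/-! ### Positive maps covariant under conjugation -/

section ConjCovariant

variable {H : Type*} [NormedAddCommGroup H] [InnerProductSpace ℂ H] [CompleteSpace H]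

/-- Positive contractions `Ψ` of the bounded operators on `H` with `Ψ (D* A D) = D* Ψ(A) D` for all
`D` in a prescribed set `𝒟`. Contractivity makes this class compact for the topology of pointwise
weak convergence. -/
structure IsConjCovariant (𝒟 : Set (H →L[ℂ] H)) (Ψ : (H →L[ℂ] H) →ₗ[ℂ] H →L[ℂ] H) : Prop where
  isPositive_apply : ∀ A, A.IsPositive → (Ψ A).IsPositive
  norm_apply_le : ∀ A, ‖Ψ A‖ ≤ ‖A‖
  map_conj : ∀ D ∈ 𝒟, ∀ A, Ψ (D† ∘L A ∘L D) = D† ∘L Ψ A ∘L D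

theorem exists_isConjCovariant_limit {𝒟 : Set (H →L[ℂ] H)} {ι : Type*} (l : Filter ι) [NeBot l]
    {Φ : ι → (H →L[ℂ] H) →ₗ[ℂ] H →L[ℂ] H} (hΦ : ∀ i, IsConjCovariant 𝒟 (Φ i)) :
    ∃ Ψ, IsConjCovariant 𝒟 Ψ ∧
      ∀ A x c, Tendsto (fun i => ⟪x, Φ i A x⟫_ℂ) l (𝓝 c) → ⟪x, Ψ A x⟫_ℂ = c := by
  let u := Ultrafilter.of l
  obtain ⟨Ψ, hΨ⟩ := exists_linearMap_tendsto_inner u fun i => (hΦ i).norm_apply_le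
  refine ⟨Ψ, ⟨fun A hA => ?_, fun A => ?_, fun D hD A => ?_⟩, fun A x c hc => ?_⟩
  · exact isPositive_iff_forall_inner_nonneg.2 fun x => ge_of_tendsto' (hΨ A x x) fun i =>
      ((hΦ i).isPositive_apply A hA).inner_nonneg_right x
  · refine opNorm_le_of_norm_inner_le (norm_nonneg A) fun x y =>
      le_of_tendsto' (hΨ A x y).norm fun i => (norm_inner_apply_le _ x y).trans ?_
    gcongr
    exact (hΦ i).norm_apply_le A
  · refine ContinuousLinearMap.ext fun y => ext_inner_left ℂ fun x => ?_
    refine tendsto_nhds_unique (hΨ _ x y) ?_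
    simpa only [(hΦ _).map_conj D hD, ContinuousLinearMap.comp_apply,
      ContinuousLinearMap.adjoint_inner_right] using hΨ A (D x) (D y)
  · exact tendsto_nhds_unique (hΨ A x x) (hc.mono_left (Ultrafilter.of_le l))

/-- The completely positive map `A ↦ ∑ j ∈ s, (G j)* A (G j)` with Kraus operators `G j`. -/
def krausMap {ι : Type*} (s : Finset ι) (G : ι → H →L[ℂ] H) :
    (H →L[ℂ] H) →ₗ[ℂ] H →L[ℂ] H where
  toFun A := ∑ j ∈ s, (G j)† ∘L A ∘L G j
  map_add' A B := by
    simp only [ContinuousLinearMap.add_comp, ContinuousLinearMap.comp_add, Finset.sum_add_distrib]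
  map_smul' c A := by
    simp only [ContinuousLinearMap.smul_comp, ContinuousLinearMap.comp_smul, Finset.smul_sum,
      RingHom.id_apply]

theorem inner_krausMap_apply {ι : Type*} (s : Finset ι) (G : ι → H →L[ℂ] H) (A : H →L[ℂ] H)
    (x y : H) : ⟪x, krausMap s G A y⟫_ℂ = ∑ j ∈ s, ⟪G j x, A (G j y)⟫_ℂ := by
  simp only [krausMap, LinearMap.coe_mk, AddHom.coe_mk, _root_.sum_apply, inner_sum,
    ContinuousLinearMap.comp_apply, ContinuousLinearMap.adjoint_inner_right]

theorem norm_krausMap_apply_le {ι : Type*} {s : Finset ι} {G : ι → H →L[ℂ] H}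
    (hG : ∀ x, ∑ j ∈ s, ‖G j x‖ ^ 2 ≤ ‖x‖ ^ 2) (A : H →L[ℂ] H) : ‖krausMap s G A‖ ≤ ‖A‖ := by
  have sqrt_sum_le : ∀ x, √(∑ j ∈ s, ‖G j x‖ ^ 2) ≤ ‖x‖ := fun x =>
    (Real.sqrt_le_left (norm_nonneg x)).2 (hG x)
  refine opNorm_le_of_norm_inner_le (norm_nonneg A) fun x y => ?_
  calc ‖⟪x, krausMap s G A y⟫_ℂ‖
      ≤ ∑ j ∈ s, ‖A‖ * (‖G j x‖ * ‖G j y‖) := by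
        rw [inner_krausMap_apply]
        refine norm_sum_le_of_le _ fun j _ => (norm_inner_apply_le A _ _).trans_eq (mul_assoc _ _ _)
    _ = ‖A‖ * ∑ j ∈ s, ‖G j x‖ * ‖G j y‖ := (Finset.mul_sum _ _ _).symm
    _ ≤ ‖A‖ * (√(∑ j ∈ s, ‖G j x‖ ^ 2) * √(∑ j ∈ s, ‖G j y‖ ^ 2)) := by
        gcongr
        exact Real.sum_mul_le_sqrt_mul_sqrt _ _ _
    _ ≤ ‖A‖ * (‖x‖ * ‖y‖) := by
        gcongr
        exacts [sqrt_sum_le x, sqrt_sum_le y]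
    _ = ‖A‖ * ‖x‖ * ‖y‖ := (mul_assoc _ _ _).symm

theorem isConjCovariant_krausMap {𝒟 : Set (H →L[ℂ] H)} {ι : Type*} {s : Finset ι}
    {G : ι → H →L[ℂ] H} (hcomm : ∀ j, ∀ D ∈ 𝒟, Commute (G j) D)
    (hG : ∀ x, ∑ j ∈ s, ‖G j x‖ ^ 2 ≤ ‖x‖ ^ 2) : IsConjCovariant 𝒟 (krausMap s G) where
  isPositive_apply A hA :=
    ContinuousLinearMap.isPositive_sum s fun j _ => hA.adjoint_conj (G j)
  norm_apply_le := norm_krausMap_apply_le hG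
  map_conj D hD A := by
    refine ContinuousLinearMap.ext fun y => ext_inner_left ℂ fun x => ?_
    have hcomm_apply : ∀ j z, G j (D z) = D (G j z) := fun j z => congr($(hcomm j D hD) z)
    simp only [inner_krausMap_apply, ContinuousLinearMap.comp_apply,
      ContinuousLinearMap.adjoint_inner_right, hcomm_apply]

end ConjCovariant

/-! ### Multiplication operators on `L²` -/

section Multiplication

variable {α : Type*} [MeasurableSpace α] {ν : Measure α}

theorem enorm_sq_eq_lintegral {E : Type*} [NormedAddCommGroup E] (f : Lp E 2 ν) :
    ‖f‖ₑ ^ 2 = ∫⁻ x, ‖f x‖ₑ ^ 2 ∂ν := by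
  have h := eLpNorm_nnreal_pow_eq_lintegral (μ := ν) (f := f) (p := 2) two_ne_zero
  simpa only [Lp.enorm_def, NNReal.coe_ofNat, ENNReal.coe_ofNat, ENNReal.rpow_ofNat] using h

/-- The operator of multiplication by an essentially bounded function, as a bounded operator on
`L²`; it agrees with `mulLp`, see `mulOp_toLp`. -/
def mulOp : Lp ℂ ∞ ν →L[ℂ] Lp ℂ 2 ν →L[ℂ] Lp ℂ 2 ν :=
  (ContinuousLinearMap.mul ℂ ℂ).holderL ν ∞ 2 2

theorem coeFn_mulOp (g : Lp ℂ ∞ ν) (φ : Lp ℂ 2 ν) : mulOp g φ =ᵐ[ν] fun x => g x * φ x :=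
  (ContinuousLinearMap.mul ℂ ℂ).coeFn_holder (r := 2) g φ

theorem commute_mulOp (g h : Lp ℂ ∞ ν) : Commute (mulOp g) (mulOp h) := by
  refine ContinuousLinearMap.ext fun φ => Lp.ext ?_
  change mulOp g (mulOp h φ) =ᵐ[ν] mulOp h (mulOp g φ)
  filter_upwards [coeFn_mulOp g (mulOp h φ), coeFn_mulOp h φ, coeFn_mulOp h (mulOp g φ),
    coeFn_mulOp g φ] with x hgh hh hhg hg
  rw [hgh, hh, hhg, hg, mul_left_comm]

variable {μ : Measure ℝ}

theorem coeFn_mulLp {g : ℝ → ℂ} {φ : Lp ℂ 2 μ} (h : MemLp (fun x => g x * φ x) 2 μ) :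
    mulLp g φ =ᵐ[μ] fun x => g x * φ x := by
  rw [mulLp, dif_pos h]
  exact h.coeFn_toLp

theorem memLp_mul_coeFn {g : ℝ → ℂ} (hg : MemLp g ∞ μ) (φ : Lp ℂ 2 μ) :
    MemLp (fun x => g x * φ x) 2 μ :=
  (Lp.memLp φ).mul hg

theorem memLp_top_conj {g : ℝ → ℂ} (hg : MemLp g ∞ μ) :
    MemLp (fun x => starRingEnd ℂ (g x)) ∞ μ :=
  hg.star

theorem mulOp_toLp {g : ℝ → ℂ} (hg : MemLp g ∞ μ) (φ : Lp ℂ 2 μ) :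
    mulOp (hg.toLp g) φ = mulLp g φ := by
  refine Lp.ext ?_
  filter_upwards [coeFn_mulOp (hg.toLp g) φ, hg.coeFn_toLp, coeFn_mulLp (memLp_mul_coeFn hg φ)]
    with x hmulOp htoLp hmulLp
  rw [hmulOp, htoLp, hmulLp]

theorem adjoint_mulOp_toLp {g : ℝ → ℂ} (hg : MemLp g ∞ μ) (φ : Lp ℂ 2 μ) :
    ((mulOp (hg.toLp g))†) φ = mulLp (fun x => starRingEnd ℂ (g x)) φ := by
  refine ext_inner_left ℂ fun ψ => ?_
  rw [ContinuousLinearMap.adjoint_inner_right, mulOp_toLp, L2.inner_def, L2.inner_def]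
  refine integral_congr_ae ?_
  filter_upwards [coeFn_mulLp (memLp_mul_coeFn hg ψ),
    coeFn_mulLp (memLp_mul_coeFn (memLp_top_conj hg) φ)] with x hψ hφ
  simp only [hψ, hφ, RCLike.inner_apply, map_mul]
  ring

theorem adjoint_mulOp_comp_comp_mulOp_apply {g : ℝ → ℂ} (hg : MemLp g ∞ μ)
    (A : Lp ℂ 2 μ →L[ℂ] Lp ℂ 2 μ) (φ : Lp ℂ 2 μ) :
    ((mulOp (hg.toLp g))† ∘L A ∘L mulOp (hg.toLp g)) φ =
      mulLp (fun x => starRingEnd ℂ (g x)) (A (mulLp g φ)) := by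
  rw [ContinuousLinearMap.comp_apply, ContinuousLinearMap.comp_apply, adjoint_mulOp_toLp,
    mulOp_toLp]

/-- Testing contractivity on indicators of sets of finite measure. -/
theorem ae_norm_le_one_of_enorm_mulLp_le [SigmaFinite μ] {g : ℝ → ℂ} (hg : MemLp g 2 μ)
    (hle : ∀ φ : Lp ℂ 2 μ, MemLp (fun x => g x * φ x) 2 μ → ‖mulLp g φ‖ₑ ^ 2 ≤ ‖φ‖ₑ ^ 2) :
    ∀ᵐ x ∂μ, ‖g x‖ ≤ 1 := by
  suffices h : (fun x => ‖g x‖ₑ ^ 2) ≤ᵐ[μ] fun _ => 1 by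
    filter_upwards [h] with x hx
    rwa [enorm_sq_eq_ofReal_norm_sq, ENNReal.ofReal_le_one, sq_le_one_iff₀ (norm_nonneg _)] at hx
  refine ae_le_of_forall_setLIntegral_le_of_sigmaFinite₀ (hg.1.enorm.pow_const 2) fun S hS hSf => ?_
  let φ : Lp ℂ 2 μ := indicatorConstLp 2 hS hSf.ne (1 : ℂ)
  have hφ : φ =ᵐ[μ] S.indicator fun _ => (1 : ℂ) := indicatorConstLp_coeFn
  have hgφ : (fun x => g x * φ x) =ᵐ[μ] S.indicator g := by
    filter_upwards [hφ] with x hx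
    rw [hx, ← indicator_mul_right]
    simp only [mul_one]
  have hmem : MemLp (fun x => g x * φ x) 2 μ := (hg.indicator hS).ae_eq hgφ.symm
  have lintegral_indicator_sq : ∀ f : ℝ → ℂ,
      ∫⁻ x, ‖S.indicator f x‖ₑ ^ 2 ∂μ = ∫⁻ x in S, ‖f x‖ₑ ^ 2 ∂μ := fun f => by
    rw [← lintegral_indicator hS]
    refine lintegral_congr fun x => ?_
    by_cases hx : x ∈ S <;> simp [hx]
  calc ∫⁻ x in S, ‖g x‖ₑ ^ 2 ∂μ = ‖mulLp g φ‖ₑ ^ 2 := by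
        rw [enorm_sq_eq_lintegral, ← lintegral_indicator_sq]
        refine lintegral_congr_ae (((coeFn_mulLp hmem).trans hgφ).symm.mono fun x hx => ?_)
        simp only [hx]
    _ ≤ ‖φ‖ₑ ^ 2 := hle φ hmem
    _ = ∫⁻ _ in S, 1 ∂μ := by
        rw [enorm_sq_eq_lintegral, lintegral_congr_ae (hφ.mono fun x hx => by rw [hx]),
          lintegral_indicator_sq]
        simp only [enorm_one, one_pow]

end Multiplication

section Phase

variable {μ : Measure ℝ}

theorem norm_exp_I_mul (a x : ℝ) : ‖Complex.exp (Complex.I * a * x)‖ = 1 := by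
  rw [mul_assoc, ← Complex.ofReal_mul, mul_comm, Complex.norm_exp_ofReal_mul_I]

theorem memLp_exp_I_mul (a : ℝ) : MemLp (fun x : ℝ => Complex.exp (Complex.I * a * x)) ∞ μ :=
  memLp_top_of_bound (by fun_prop) 1 (ae_of_all _ fun x => (norm_exp_I_mul a x).le)

/-- The unitary `e^{iaM}` on `L²`. -/
def phaseOp (a : ℝ) : Lp ℂ 2 μ →L[ℂ] Lp ℂ 2 μ :=
  mulOp ((memLp_exp_I_mul a).toLp _)

theorem coeFn_phaseOp (a : ℝ) (φ : Lp ℂ 2 μ) :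
    phaseOp a φ =ᵐ[μ] fun x => Complex.exp (Complex.I * a * x) * φ x := by
  rw [phaseOp, mulOp_toLp]
  exact coeFn_mulLp (memLp_mul_coeFn (memLp_exp_I_mul a) φ)

theorem phaseOp_zero (φ : Lp ℂ 2 μ) : phaseOp 0 φ = φ := by
  refine Lp.ext ?_
  filter_upwards [coeFn_phaseOp 0 φ] with x hx
  rw [hx, Complex.ofReal_zero, mul_zero, zero_mul, Complex.exp_zero, one_mul]

theorem adjoint_phaseOp_apply (a : ℝ) (φ : Lp ℂ 2 μ) :
    ((phaseOp a)†) φ = mulLp (fun x => Complex.exp (-(Complex.I * a * x))) φ := by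
  rw [phaseOp, adjoint_mulOp_toLp]
  congr! 2 with x
  rw [← Complex.exp_conj]
  simp only [map_mul, Complex.conj_I, Complex.conj_ofReal, neg_mul]

theorem enorm_phaseOp_sub_sq (a b : ℝ) (φ : Lp ℂ 2 μ) :
    ‖phaseOp a φ - phaseOp b φ‖ₑ ^ 2 = ∫⁻ x : ℝ,
      ‖(Complex.exp (Complex.I * a * x) - Complex.exp (Complex.I * b * x)) * φ x‖ₑ ^ 2 ∂μ := by
  rw [enorm_sq_eq_lintegral]
  refine lintegral_congr_ae ?_
  filter_upwards [coeFn_phaseOp a φ, coeFn_phaseOp b φ, Lp.coeFn_sub (phaseOp a φ) (phaseOp b φ)]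
    with x ha hb hsub
  rw [hsub, Pi.sub_apply, ha, hb, sub_mul]

theorem continuous_phaseOp_apply (φ : Lp ℂ 2 μ) : Continuous fun a : ℝ => phaseOp a φ := by
  refine continuous_iff_continuousAt.2 fun b => ?_
  suffices h : Tendsto (fun a => ‖phaseOp a φ - phaseOp b φ‖ₑ ^ 2) (𝓝 b) (𝓝 0) by
    have hsqrt := h.ennrpow_const (((2 : ℕ) : ℝ)⁻¹)
    simp only [ENNReal.pow_rpow_inv_natCast two_ne_zero] at hsqrt
    rw [ENNReal.zero_rpow_of_pos (by positivity)] at hsqrt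
    refine tendsto_iff_edist_tendsto_0.2 ?_
    simpa only [edist_eq_enorm_sub] using hsqrt
  simp only [enorm_phaseOp_sub_sq]
  rw [← lintegral_zero (μ := μ)]
  refine tendsto_lintegral_filter_of_dominated_convergence (fun x => (2 * ‖φ x‖ₑ) ^ 2) ?_ ?_ ?_ ?_
  · exact Eventually.of_forall fun a => by fun_prop
  · refine Eventually.of_forall fun a => ae_of_all _ fun x => ?_
    rw [enorm_mul]
    gcongr
    refine enorm_sub_le.trans_eq ?_
    rw [← ofReal_norm, norm_exp_I_mul, ← ofReal_norm, norm_exp_I_mul, ENNReal.ofReal_one,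
      one_add_one_eq_two]
  · simp only [mul_pow]
    rw [lintegral_const_mul' _ _ (by finiteness), ← enorm_sq_eq_lintegral]
    finiteness
  · refine ae_of_all _ fun x => ?_
    have hcont : Continuous fun a : ℝ =>
        ‖(Complex.exp (Complex.I * a * x) - Complex.exp (Complex.I * b * x)) * φ x‖ₑ ^ 2 := by
      fun_prop
    simpa using hcont.tendsto b

end Phase

/-! ### The Fourier transform of phase orbits -/

section Fourier

theorem memLp_top_indicator_one {μ : Measure ℝ} {B : Set ℝ} (hB : MeasurableSet B) :
    MemLp (B.indicator fun _ => (1 : ℂ)) ∞ μ :=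
  (memLp_top_const (1 : ℂ)).indicator hB

theorem inner_mulLp_indicator_one {μ : Measure ℝ} {B : Set ℝ} (hB : MeasurableSet B)
    (φ : Lp ℂ 2 μ) :
    ⟪φ, mulLp (B.indicator fun _ => (1 : ℂ)) φ⟫_ℂ = ((∫⁻ x in B, ‖φ x‖ₑ ^ 2 ∂μ).toReal : ℂ) := by
  have inner_eq : (fun x => ⟪φ x, mulLp (B.indicator fun _ => (1 : ℂ)) φ x⟫_ℂ) =ᵐ[μ]
      B.indicator fun x => ((‖φ x‖ ^ 2 : ℝ) : ℂ) := by
    filter_upwards [coeFn_mulLp (memLp_mul_coeFn (memLp_top_indicator_one hB) φ)] with x hx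
    rw [hx]
    by_cases hxB : x ∈ B
    · simp only [indicator_of_mem hxB, one_mul, inner_self_eq_norm_sq_to_K, Complex.ofReal_pow]
      rfl
    · simp only [indicator_of_notMem hxB, zero_mul, inner_zero_right]
  simp only [enorm_sq_eq_ofReal_norm_sq]
  rw [L2.inner_def, integral_congr_ae inner_eq, integral_indicator hB, integral_complex_ofReal,
    integral_eq_lintegral_of_nonneg_ae (ae_of_all _ fun x => sq_nonneg _)
      ((Lp.aestronglyMeasurable φ).norm.pow 2).restrict]

variable {𝓕 : H2 ≃ₗᵢ[ℂ] H2}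

/-- The spectral projection `𝓕 χ_B(M) 𝓕*` of the momentum operator. -/
def fourierProj (𝓕 : H2 ≃ₗᵢ[ℂ] H2) {B : Set ℝ} (hB : MeasurableSet B) : H2 →L[ℂ] H2 :=
  (𝓕 : H2 →L[ℂ] H2) ∘L mulOp ((memLp_top_indicator_one hB).toLp _) ∘L (𝓕.symm : H2 →L[ℂ] H2)

theorem fourierProj_apply {B : Set ℝ} (hB : MeasurableSet B) (φ : H2) :
    fourierProj 𝓕 hB φ = 𝓕 (mulLp (B.indicator fun _ => (1 : ℂ)) (𝓕.symm φ)) :=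
  congrArg 𝓕 (mulOp_toLp (memLp_top_indicator_one hB) (𝓕.symm φ))

theorem inner_fourierProj_apply {B : Set ℝ} (hB : MeasurableSet B) (φ : H2) :
    ⟪φ, fourierProj 𝓕 hB φ⟫_ℂ = ((∫⁻ a in B, ‖𝓕.symm φ a‖ₑ ^ 2).toReal : ℂ) := by
  rw [← inner_mulLp_indicator_one hB, fourierProj_apply, ← 𝓕.symm.inner_map_map,
    𝓕.symm_apply_apply]

/-- The function by which `φ` has to be multiplied so that the inverse Fourier transform of the
product is the matrix coefficient `a ↦ ⟪w, e^{iaM} φ⟫`. -/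
def fourierSymbol (w : H2) (x : ℝ) : ℂ :=
  √(2 * Real.pi) * starRingEnd ℂ (w x)

theorem memLp_fourierSymbol (w : H2) : MemLp (fourierSymbol w) 2 :=
  (Lp.memLp w).star.const_mul _

theorem fourier_symm_mulLp_fourierSymbol (h𝓕 : IsFourier 𝓕) {w φ : H2}
    (hmem : MemLp (fun x => fourierSymbol w x * φ x) 2) :
    𝓕.symm (mulLp (fourierSymbol w) φ) =ᵐ[volume] fun a => ⟪w, phaseOp a φ⟫_ℂ := by
  have hprod := coeFn_mulLp hmem
  have hint : Integrable (mulLp (fourierSymbol w) φ) := by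
    refine ((L2.integrable_inner (𝕜 := ℂ) w φ).const_mul (√(2 * Real.pi) : ℂ)).congr ?_
    filter_upwards [hprod] with x hx
    rw [hx, fourierSymbol, RCLike.inner_apply, mul_comm (φ x), mul_assoc]
  filter_upwards [h𝓕.2 _ hint] with a ha
  rw [ha, L2.inner_def, ← integral_const_mul]
  refine integral_congr_ae ?_
  filter_upwards [hprod, coeFn_phaseOp a φ] with x hx hphase
  have hpi : (√(2 * Real.pi) : ℂ) ≠ 0 := by
    exact_mod_cast (Real.sqrt_pos.2 Real.two_pi_pos).ne'
  rw [hx, hphase, fourierSymbol, RCLike.inner_apply]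
  field_simp

theorem lintegral_fourier_symm_mulLp (h𝓕 : IsFourier 𝓕) {w φ : H2}
    (hmem : MemLp (fun x => fourierSymbol w x * φ x) 2) (B : Set ℝ) :
    ∫⁻ a in B, ‖𝓕.symm (mulLp (fourierSymbol w) φ) a‖ₑ ^ 2 =
      ∫⁻ a in B, ‖⟪w, phaseOp a φ⟫_ℂ‖ₑ ^ 2 := by
  refine lintegral_congr_ae (ae_restrict_of_ae ?_)
  filter_upwards [fourier_symm_mulLp_fourierSymbol h𝓕 hmem] with a ha
  rw [ha]

theorem enorm_mulLp_fourierSymbol_sq (h𝓕 : IsFourier 𝓕) {w φ : H2}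
    (hmem : MemLp (fun x => fourierSymbol w x * φ x) 2) :
    ‖mulLp (fourierSymbol w) φ‖ₑ ^ 2 = ∫⁻ a, ‖⟪w, phaseOp a φ⟫_ℂ‖ₑ ^ 2 := by
  rw [← 𝓕.symm.enorm_map, enorm_sq_eq_lintegral, ← setLIntegral_univ,
    lintegral_fourier_symm_mulLp h𝓕 hmem, setLIntegral_univ]

theorem memLp_top_fourierSymbol (h𝓕 : IsFourier 𝓕) {w : H2}
    (hw : ∀ φ : H2, ∫⁻ a, ‖⟪w, phaseOp a φ⟫_ℂ‖ₑ ^ 2 ≤ ‖φ‖ₑ ^ 2) :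
    MemLp (fourierSymbol w) ∞ :=
  memLp_top_of_bound (memLp_fourierSymbol w).aestronglyMeasurable 1 <|
    ae_norm_le_one_of_enorm_mulLp_le (memLp_fourierSymbol w) fun φ hmem =>
      (enorm_mulLp_fourierSymbol_sq h𝓕 hmem).trans_le (hw φ)

end Fourier

/-! ### Covariant measures with a density -/

section Density

variable {𝓕 : H2 ≃ₗᵢ[ℂ] H2}

theorem exists_isConjCovariant_of_tsum_lintegral_le (h𝓕 : IsFourier 𝓕) {ι : Type*} {w : ι → H2}
    (hw : ∀ φ : H2, ∑' j, ∫⁻ a, ‖⟪w j, phaseOp a φ⟫_ℂ‖ₑ ^ 2 ≤ ‖φ‖ₑ ^ 2) :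
    ∃ Ψ, IsConjCovariant (range mulOp) Ψ ∧ ∀ (B : Set ℝ) (hB : MeasurableSet B) (φ : H2),
      ⟪φ, Ψ (fourierProj 𝓕 hB) φ⟫_ℂ =
        ((∑' j, ∫⁻ a in B, ‖⟪w j, phaseOp a φ⟫_ℂ‖ₑ ^ 2).toReal : ℂ) := by
  have hsymbol : ∀ j, MemLp (fourierSymbol (w j)) ∞ := fun j =>
    memLp_top_fourierSymbol h𝓕 fun φ => (ENNReal.le_tsum j).trans (hw φ)
  have hprod : ∀ j (φ : H2), MemLp (fun x => fourierSymbol (w j) x * φ x) 2 := fun j =>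
    memLp_mul_coeFn (hsymbol j)
  let G : ι → H2 →L[ℂ] H2 := fun j => mulOp ((hsymbol j).toLp _)
  have sum_norm_sq_le : ∀ (s : Finset ι) φ, ∑ j ∈ s, ‖G j φ‖ ^ 2 ≤ ‖φ‖ ^ 2 := fun s φ => by
    have h : ∑ j ∈ s, ‖G j φ‖ₑ ^ 2 ≤ ‖φ‖ₑ ^ 2 := by
      simp only [G, mulOp_toLp, enorm_mulLp_fourierSymbol_sq h𝓕 (hprod _ φ)]
      exact (ENNReal.sum_le_tsum s).trans (hw φ)
    simp only [enorm_sq_eq_ofReal_norm_sq] at h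
    rwa [← ENNReal.ofReal_sum_of_nonneg fun _ _ => sq_nonneg _,
      ENNReal.ofReal_le_ofReal_iff (sq_nonneg _)] at h
  have hcomm : ∀ j, ∀ D ∈ range mulOp, Commute (G j) D := by
    rintro j _ ⟨g, rfl⟩
    exact commute_mulOp _ g
  obtain ⟨Ψ, hΨ, hlim⟩ := exists_isConjCovariant_limit atTop fun s : Finset ι =>
    isConjCovariant_krausMap hcomm (sum_norm_sq_le s)
  refine ⟨Ψ, hΨ, fun B hB φ => hlim _ φ _ ?_⟩
  have tsum_ne_top : ∑' j, ∫⁻ a in B, ‖⟪w j, phaseOp a φ⟫_ℂ‖ₑ ^ 2 ≠ ∞ := by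
    refine ne_top_of_le_ne_top (by finiteness) ((ENNReal.tsum_le_tsum fun j => ?_).trans (hw φ))
    exact setLIntegral_le_lintegral B _
  have hsum := Complex.hasSum_ofReal.2 (ENNReal.hasSum_toReal tsum_ne_top)
  rw [← ENNReal.tsum_toReal_eq fun j => ENNReal.ne_top_of_tsum_ne_top tsum_ne_top j] at hsum
  refine Tendsto.congr (fun s => ?_) hsum
  simp only [inner_krausMap_apply, G, mulOp_toLp, inner_fourierProj_apply,
    lintegral_fourier_symm_mulLp h𝓕 (hprod _ φ)]

/-- The density at `a` of the measure `B ↦ ⟪φ, (∫_B e^{-iaM} T e^{iaM} da) φ⟫`. -/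
def orbitDensity (T : H2 →L[ℂ] H2) (φ : H2) (a : ℝ) : ℝ≥0∞ :=
  ENNReal.ofReal (⟪phaseOp a φ, T (phaseOp a φ)⟫_ℂ).re

/-- By Parseval for `√T`, the density of `T` is a sum `∑ j, |⟪w j, e^{iaM} φ⟫|²` of squared Fourier
transforms. -/
theorem exists_isConjCovariant_of_lintegral_orbitDensity_le (h𝓕 : IsFourier 𝓕)
    {T : H2 →L[ℂ] H2} (hT : T.IsPositive)
    (hle : ∀ φ : H2, ∫⁻ a, orbitDensity T φ a ≤ ‖φ‖ₑ ^ 2) :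
    ∃ Ψ, IsConjCovariant (range mulOp) Ψ ∧ ∀ (B : Set ℝ) (hB : MeasurableSet B) (φ : H2),
      ⟪φ, Ψ (fourierProj 𝓕 hB) φ⟫_ℂ = ((∫⁻ a in B, orbitDensity T φ a).toReal : ℂ) := by
  have : Fact ((2 : ℝ≥0∞) ≠ ∞) := ⟨ENNReal.ofNat_ne_top⟩
  obtain ⟨ι, _, w, hw⟩ := exists_countable_tsum_enorm_inner_sq hT
  have hmeas : ∀ j φ, Measurable fun a => ‖⟪w j, phaseOp a φ⟫_ℂ‖ₑ ^ 2 := fun j φ =>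
    (continuous_const.inner (continuous_phaseOp_apply φ)).enorm.measurable.pow_const 2
  have tsum_eq : ∀ φ (B : Set ℝ), ∑' j, ∫⁻ a in B, ‖⟪w j, phaseOp a φ⟫_ℂ‖ₑ ^ 2 =
      ∫⁻ a in B, orbitDensity T φ a := fun φ B => by
    rw [← lintegral_tsum fun j => (hmeas j φ).aemeasurable]
    simp only [hw, orbitDensity]
  have tsum_le : ∀ φ : H2, ∑' j, ∫⁻ a, ‖⟪w j, phaseOp a φ⟫_ℂ‖ₑ ^ 2 ≤ ‖φ‖ₑ ^ 2 := fun φ => by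
    simpa only [← tsum_eq, setLIntegral_univ] using
      (setLIntegral_univ (orbitDensity T φ)).trans_le (hle φ)
  obtain ⟨Ψ, hΨ, hinner⟩ := exists_isConjCovariant_of_tsum_lintegral_le h𝓕 tsum_le
  exact ⟨Ψ, hΨ, fun B hB φ => by rw [hinner, tsum_eq]⟩

end Density

/-! ### Averaging -/

section Averaging

theorem lintegral_measure_image_add_comm {G : Type*} [AddCommGroup G] [MeasurableSpace G]
    [MeasurableAdd₂ G] [MeasurableNeg G] (μ ν : Measure G) [SFinite μ] [SFinite ν]
    [ν.IsAddLeftInvariant] [ν.IsNegInvariant] {B C : Set G} (hB : MeasurableSet B)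
    (hC : MeasurableSet C) :
    ∫⁻ a in B, μ ((· + a) '' C) ∂ν = ∫⁻ s in C, μ ((· + s) '' B) ∂ν := by
  have lintegral_eq : ∀ {B C : Set G}, MeasurableSet B → MeasurableSet C →
      ∫⁻ a in B, μ ((· + a) '' C) ∂ν = ∫⁻ t, ν (B ∩ (t - ·) ⁻¹' C) ∂μ := by
    intro B C hB hC
    have hS : MeasurableSet {p : G × G | p.2 - p.1 ∈ C} :=
      hC.preimage (measurable_snd.sub measurable_fst)
    calc ∫⁻ a in B, μ ((· + a) '' C) ∂ν = ((ν.restrict B).prod μ) {p | p.2 - p.1 ∈ C} := by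
          rw [Measure.prod_apply hS]
          simp only [image_add_right, preimage, ← sub_eq_add_neg, mem_ofPred_eq]
      _ = ∫⁻ t, ν (B ∩ (t - ·) ⁻¹' C) ∂μ := by
          rw [Measure.prod_apply_symm hS]
          refine lintegral_congr fun t => ?_
          rw [Measure.restrict_apply' hB, inter_comm]
          rfl
  rw [lintegral_eq hB hC, lintegral_eq hC hB]
  refine lintegral_congr fun t => ?_
  have hsub := Measure.measurePreserving_sub_left ν t
  rw [← hsub.measure_preimage (hC.inter (hB.preimage hsub.measurable)).nullMeasurableSet,
    preimage_inter, ← preimage_comp, inter_comm]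
  congr 2
  ext a
  simp only [mem_preimage, Function.comp_apply, sub_sub_cancel]

theorem tendsto_average_Ioc {f : ℝ → ℝ} (hf : Continuous f) (hf₀ : ∀ s, 0 ≤ f s) :
    Tendsto (fun c : ℝ => (ENNReal.ofReal c⁻¹ * ∫⁻ s in Ioc 0 c, ENNReal.ofReal (f s)).toReal)
      (𝓝[>] 0) (𝓝 (f 0)) := by
  refine (hf.integral_hasStrictDerivAt 0 0).hasDerivAt.tendsto_slope_zero_right.congr' ?_
  filter_upwards [self_mem_nhdsWithin] with c hc
  replace hc : 0 < c := hc
  rw [ENNReal.toReal_mul, ENNReal.toReal_ofReal (inv_nonneg.2 hc.le),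
    ← integral_eq_lintegral_of_nonneg_ae (ae_of_all _ hf₀) hf.aestronglyMeasurable.restrict,
    zero_add, intervalIntegral.integral_same, sub_zero, intervalIntegral.integral_of_le hc.le,
    smul_eq_mul]

end Averaging

/-! ### Positive operator measures -/

namespace POM

section ScalarMeasure

variable {K : Type} [NormedAddCommGroup K] [InnerProductSpace ℂ K] [CompleteSpace K]

theorem re_inner_nonneg (E : POM K) (B : Set ℝ) (φ : K) : 0 ≤ (⟪φ, E.toFun B φ⟫_ℂ).re :=
  ((E.pos B).inner_nonneg_right φ).1

/-- The finite measure `B ↦ ⟪φ, E(B) φ⟫`. -/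
def scalarMeasure (E : POM K) (φ : K) : Measure ℝ :=
  Measure.ofMeasurable (fun B _ => ENNReal.ofReal (⟪φ, E.toFun B φ⟫_ℂ).re)
    (by simp only [E.empty, _root_.zero_apply, inner_zero_right, Complex.zero_re,
      ENNReal.ofReal_zero])
    fun B hB hdisj => by
      have hsum : HasSum (fun n => (⟪φ, E.toFun (B n) φ⟫_ℂ).re) (⟪φ, E.toFun (⋃ n, B n) φ⟫_ℂ).re :=
        Complex.hasSum_re ((E.sigma_additive B hB hdisj φ).mapL (innerSL ℂ φ))
      rw [← hsum.tsum_eq, ENNReal.ofReal_tsum_of_nonneg (fun n => E.re_inner_nonneg (B n) φ)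
        hsum.summable]

theorem scalarMeasure_apply (E : POM K) (φ : K) {B : Set ℝ} (hB : MeasurableSet B) :
    E.scalarMeasure φ B = ENNReal.ofReal (⟪φ, E.toFun B φ⟫_ℂ).re :=
  Measure.ofMeasurable_apply B hB

theorem inner_toFun_apply (E : POM K) (B : Set ℝ) (φ : K) :
    ⟪φ, E.toFun B φ⟫_ℂ = ((⟪φ, E.toFun B φ⟫_ℂ).re : ℂ) :=
  Complex.eq_re_of_ofReal_le ((E.pos B).inner_nonneg_right φ)

theorem scalarMeasure_le (E : POM K) (φ : K) (B : Set ℝ) : E.scalarMeasure φ B ≤ ‖φ‖ₑ ^ 2 := by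
  have hle : (⟪φ, E.toFun univ φ⟫_ℂ).re ≤ ‖φ‖ ^ 2 := by
    have h := ((E.le_one univ).inner_nonneg_right φ).1
    rw [_root_.sub_apply, ContinuousLinearMap.id_apply, inner_sub_right, Complex.sub_re,
      Complex.zero_re, sub_nonneg] at h
    exact h.trans_eq (inner_self_eq_norm_sq (𝕜 := ℂ) φ)
  calc E.scalarMeasure φ B ≤ E.scalarMeasure φ univ := measure_mono (subset_univ B)
    _ ≤ ‖φ‖ₑ ^ 2 := by
        rw [scalarMeasure_apply E φ MeasurableSet.univ, enorm_sq_eq_ofReal_norm_sq]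
        exact ENNReal.ofReal_le_ofReal hle

instance (E : POM K) (φ : K) : IsFiniteMeasure (E.scalarMeasure φ) :=
  ⟨(E.scalarMeasure_le φ univ).trans_lt (by finiteness)⟩

end ScalarMeasure

/-- Covariance `e^{-iaM} E(B) e^{iaM} = E(B + a)` under phase multiplications. -/
def IsCovariant {μ : Measure ℝ} (E : POM (Lp ℂ 2 μ)) : Prop :=
  ∀ (a : ℝ) (B : Set ℝ), MeasurableSet B →
    (phaseOp a)† ∘L E.toFun B ∘L phaseOp a = E.toFun ((· + a) '' B)

theorem IsCovariant.scalarMeasure_image_add {μ : Measure ℝ} {E : POM (Lp ℂ 2 μ)}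
    (hE : E.IsCovariant) (a : ℝ) {B : Set ℝ} (hB : MeasurableSet B) (φ : Lp ℂ 2 μ) :
    E.scalarMeasure φ ((· + a) '' B) = E.scalarMeasure (phaseOp a φ) B := by
  rw [scalarMeasure_apply E _ ((measurableEmbedding_addRight a).measurableSet_image' hB),
    scalarMeasure_apply E _ hB, ← hE a B hB, ContinuousLinearMap.comp_apply,
    ContinuousLinearMap.comp_apply, ContinuousLinearMap.adjoint_inner_right]

theorem IsCovariant.lintegral_orbitDensity {E : POM H2} (hE : E.IsCovariant) {c : ℝ} (hc : 0 < c)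
    {B : Set ℝ} (hB : MeasurableSet B) (φ : H2) :
    ∫⁻ a in B, orbitDensity (((c⁻¹ : ℝ) : ℂ) • E.toFun (Ioc 0 c)) φ a =
      ENNReal.ofReal c⁻¹ * ∫⁻ s in Ioc 0 c, E.scalarMeasure (phaseOp s φ) B := by
  have density_eq : ∀ a, orbitDensity (((c⁻¹ : ℝ) : ℂ) • E.toFun (Ioc 0 c)) φ a =
      ENNReal.ofReal c⁻¹ * E.scalarMeasure φ ((· + a) '' Ioc 0 c) := fun a => by
    rw [hE.scalarMeasure_image_add a measurableSet_Ioc, scalarMeasure_apply E _ measurableSet_Ioc,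
      orbitDensity, _root_.smul_apply, inner_smul_right, Complex.re_ofReal_mul,
      ENNReal.ofReal_mul (inv_nonneg.2 hc.le)]
  simp only [density_eq]
  rw [lintegral_const_mul' _ _ ENNReal.ofReal_ne_top,
    lintegral_measure_image_add_comm _ _ hB measurableSet_Ioc]
  simp only [hE.scalarMeasure_image_add _ hB]

theorem IsCovariant.lintegral_orbitDensity_le {E : POM H2} (hE : E.IsCovariant) {c : ℝ}
    (hc : 0 < c) (φ : H2) :
    ∫⁻ a, orbitDensity (((c⁻¹ : ℝ) : ℂ) • E.toFun (Ioc 0 c)) φ a ≤ ‖φ‖ₑ ^ 2 := by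
  rw [← setLIntegral_univ, hE.lintegral_orbitDensity hc MeasurableSet.univ]
  calc ENNReal.ofReal c⁻¹ * ∫⁻ s in Ioc 0 c, E.scalarMeasure (phaseOp s φ) univ
      ≤ ENNReal.ofReal c⁻¹ * ∫⁻ _ in Ioc 0 c, ‖φ‖ₑ ^ 2 := by
        gcongr with s
        rw [← hE.scalarMeasure_image_add s MeasurableSet.univ]
        exact E.scalarMeasure_le φ _
    _ = ‖φ‖ₑ ^ 2 := by
        rw [setLIntegral_const, Real.volume_Ioc, sub_zero, mul_left_comm,
          ← ENNReal.ofReal_mul (inv_nonneg.2 hc.le), inv_mul_cancel₀ hc.ne', ENNReal.ofReal_one,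
          mul_one]

theorem tendsto_average_scalarMeasure {μ : Measure ℝ} (E : POM (Lp ℂ 2 μ)) {B : Set ℝ}
    (hB : MeasurableSet B) (φ : Lp ℂ 2 μ) :
    Tendsto (fun c : ℝ =>
        (ENNReal.ofReal c⁻¹ * ∫⁻ s in Ioc 0 c, E.scalarMeasure (phaseOp s φ) B).toReal)
      (𝓝[>] 0) (𝓝 (⟪φ, E.toFun B φ⟫_ℂ).re) := by
  have hcont : Continuous fun s : ℝ => (⟪phaseOp s φ, E.toFun B (phaseOp s φ)⟫_ℂ).re :=
    Complex.continuous_re.comp ((continuous_phaseOp_apply φ).inner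
      ((E.toFun B).continuous.comp (continuous_phaseOp_apply φ)))
  simpa only [scalarMeasure_apply E _ hB, phaseOp_zero] using
    tendsto_average_Ioc hcont fun s => E.re_inner_nonneg B _

/-- The averages `c⁻¹ ∫_0^c E(B + s) ds` converge to `E(B)` and have the density
`c⁻¹ E((0, c])`. -/
theorem IsCovariant.exists_isConjCovariant {𝓕 : H2 ≃ₗᵢ[ℂ] H2} (h𝓕 : IsFourier 𝓕) {E : POM H2}
    (hE : E.IsCovariant) :
    ∃ Ψ, IsConjCovariant (range mulOp) Ψ ∧
      ∀ (B : Set ℝ) (hB : MeasurableSet B), Ψ (fourierProj 𝓕 hB) = E.toFun B := by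
  let c : ℕ → ℝ := fun n => 1 / ((n : ℝ) + 1)
  have hc : ∀ n, 0 < c n := fun n => Nat.one_div_pos_of_nat
  have hc_lim : Tendsto c atTop (𝓝[>] 0) :=
    tendsto_nhdsWithin_iff.2 ⟨tendsto_one_div_add_atTop_nhds_zero_nat, Eventually.of_forall hc⟩
  choose Φ hΦ hΦ_inner using fun n =>
    exists_isConjCovariant_of_lintegral_orbitDensity_le h𝓕
      ((E.pos (Ioc 0 (c n))).smul_of_nonneg
        (Complex.zero_le_real.2 (inv_nonneg.2 (hc n).le)))
      (hE.lintegral_orbitDensity_le (hc n))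
  obtain ⟨Ψ, hΨ, hlim⟩ := exists_isConjCovariant_limit atTop hΦ
  refine ⟨Ψ, hΨ, fun B hB => eq_of_forall_inner_self_eq fun φ => hlim _ φ _ ?_⟩
  simp only [hΦ_inner, hE.lintegral_orbitDensity (hc _) hB]
  rw [E.inner_toFun_apply]
  exact (Complex.continuous_ofReal.tendsto _).comp
    ((E.tendsto_average_scalarMeasure hB φ).comp hc_lim)

end POM

/-! ### Reduction to the whole line -/

section Restriction

namespace POM

/-- The positive operator measure `B ↦ V* E(B) V` obtained by compressing `E` along a
contraction `V`. -/
def compress {K L : Type} [NormedAddCommGroup K] [InnerProductSpace ℂ K] [CompleteSpace K]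
    [NormedAddCommGroup L] [InnerProductSpace ℂ L] [CompleteSpace L] (E : POM K) (V : L →L[ℂ] K)
    (hV : ‖V‖ ≤ 1) : POM L where
  toFun B := V† ∘L E.toFun B ∘L V
  pos B := (E.pos B).adjoint_conj V
  le_one B := by
    have hVV : (ContinuousLinearMap.id ℂ L - V† ∘L V).IsPositive := by
      refine isPositive_iff_forall_inner_nonneg.2 fun x => ?_
      rw [_root_.sub_apply, ContinuousLinearMap.comp_apply, ContinuousLinearMap.id_apply,
        inner_sub_right, ContinuousLinearMap.adjoint_inner_right, sub_nonneg,
        inner_self_eq_norm_sq_to_K, inner_self_eq_norm_sq_to_K]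
      have hVx : ‖V x‖ ≤ ‖x‖ := by simpa only [one_mul] using V.le_of_opNorm_le hV x
      exact_mod_cast pow_le_pow_left₀ (norm_nonneg _) hVx 2
    have hsplit : ContinuousLinearMap.id ℂ L - V† ∘L E.toFun B ∘L V =
        (ContinuousLinearMap.id ℂ L - V† ∘L V) +
          V† ∘L (ContinuousLinearMap.id ℂ K - E.toFun B) ∘L V := by
      rw [ContinuousLinearMap.sub_comp, ContinuousLinearMap.comp_sub, ContinuousLinearMap.id_comp,
        sub_add_sub_cancel]
    rw [hsplit]
    exact hVV.add ((E.le_one B).adjoint_conj V)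
  empty := by
    rw [E.empty, ContinuousLinearMap.zero_comp, ContinuousLinearMap.comp_zero]
  sigma_additive B hB hdisj x := (E.sigma_additive B hB hdisj (V x)).mapL (V†)

end POM

variable {μ : Measure ℝ} {I : Set ℝ}

/-- Restriction `L²(μ) → L²(I)` of functions to `I`. -/
def restrictL2 (μ : Measure ℝ) (I : Set ℝ) : Lp ℂ 2 μ →L[ℂ] Lp ℂ 2 (μ.restrict I) :=
  LpToLpRestrictCLM ℝ ℂ ℂ μ 2 I

theorem coeFn_restrictL2 (φ : Lp ℂ 2 μ) : restrictL2 μ I φ =ᵐ[μ.restrict I] φ :=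
  LpToLpRestrictCLM_coeFn ℂ I φ

theorem norm_restrictL2_le : ‖restrictL2 μ I‖ ≤ 1 :=
  ContinuousLinearMap.opNorm_le_bound _ zero_le_one fun φ => by
    rw [one_mul]
    exact norm_Lp_toLp_restrict_le I φ

theorem restrictL2_adjoint_apply (hI : MeasurableSet I) (φ : Lp ℂ 2 (μ.restrict I)) :
    restrictL2 μ I (((restrictL2 μ I)†) φ) = φ := by
  have hmem : MemLp (I.indicator φ) 2 μ := (memLp_indicator_iff_restrict hI).2 (Lp.memLp φ)
  have adjoint_eq : ((restrictL2 μ I)†) φ = hmem.toLp _ := by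
    refine ext_inner_left ℂ fun ψ => ?_
    rw [ContinuousLinearMap.adjoint_inner_right, L2.inner_def, L2.inner_def]
    calc ∫ x in I, ⟪restrictL2 μ I ψ x, φ x⟫_ℂ ∂μ = ∫ x in I, ⟪ψ x, φ x⟫_ℂ ∂μ :=
          integral_congr_ae ((coeFn_restrictL2 ψ).mono fun x hx => by simp only [hx])
      _ = ∫ x, ⟪ψ x, I.indicator φ x⟫_ℂ ∂μ := by
          rw [← integral_indicator hI]
          refine integral_congr_ae (ae_of_all _ fun x => ?_)
          by_cases hx : x ∈ I <;> simp [hx]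
      _ = ∫ x, ⟪ψ x, hmem.toLp _ x⟫_ℂ ∂μ :=
          integral_congr_ae (hmem.coeFn_toLp.mono fun x hx => by simp only [hx])
  refine Lp.ext ?_
  filter_upwards [coeFn_restrictL2 (I := I) (((restrictL2 μ I)†) φ), ae_restrict_mem hI,
    ae_restrict_of_ae hmem.coeFn_toLp] with x hrestrict hxI hindicator
  rw [hrestrict, adjoint_eq, hindicator, indicator_of_mem hxI]

theorem restrictL2_mulLp {g : ℝ → ℂ} (hg : MemLp g ∞ μ) (φ : Lp ℂ 2 μ) :
    restrictL2 μ I (mulLp g φ) = mulLp g (restrictL2 μ I φ) := by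
  refine Lp.ext ?_
  filter_upwards [coeFn_restrictL2 (I := I) (mulLp g φ), coeFn_restrictL2 (I := I) φ,
    ae_restrict_of_ae (coeFn_mulLp (memLp_mul_coeFn hg φ)),
    coeFn_mulLp (memLp_mul_coeFn (hg.restrict I) (restrictL2 μ I φ))]
    with x hrestrict_mul hrestrict hmul hmul_restrict
  rw [hrestrict_mul, hmul, hmul_restrict, hrestrict]

theorem restrictL2_adjoint_mulOp {g : ℝ → ℂ} (hg : MemLp g ∞ μ) :
    restrictL2 μ I ∘L (mulOp (hg.toLp g))† =
      (mulOp ((hg.restrict I).toLp g))† ∘L restrictL2 μ I := by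
  ext1 φ
  simp only [ContinuousLinearMap.comp_apply, adjoint_mulOp_toLp,
    restrictL2_mulLp (memLp_top_conj hg)]

theorem mulOp_comp_adjoint_restrictL2 {g : ℝ → ℂ} (hg : MemLp g ∞ μ) :
    mulOp (hg.toLp g) ∘L (restrictL2 μ I)† =
      (restrictL2 μ I)† ∘L mulOp ((hg.restrict I).toLp g) := by
  simpa only [ContinuousLinearMap.adjoint_comp, ContinuousLinearMap.adjoint_adjoint] using
    congrArg ContinuousLinearMap.adjoint (restrictL2_adjoint_mulOp (I := I) hg)

theorem restrictL2_conj_mulOp {g : ℝ → ℂ} (hg : MemLp g ∞ μ) (A : Lp ℂ 2 μ →L[ℂ] Lp ℂ 2 μ) :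
    restrictL2 μ I ∘L ((mulOp (hg.toLp g))† ∘L A ∘L mulOp (hg.toLp g)) ∘L (restrictL2 μ I)† =
      (mulOp ((hg.restrict I).toLp g))† ∘L (restrictL2 μ I ∘L A ∘L (restrictL2 μ I)†) ∘L
        mulOp ((hg.restrict I).toLp g) := by
  simp only [ContinuousLinearMap.comp_assoc, mulOp_comp_adjoint_restrictL2]
  rw [← ContinuousLinearMap.comp_assoc, restrictL2_adjoint_mulOp, ContinuousLinearMap.comp_assoc]

theorem restrictL2_phaseOp (a : ℝ) (φ : Lp ℂ 2 μ) :
    restrictL2 μ I (phaseOp a φ) = phaseOp a (restrictL2 μ I φ) := by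
  simp only [phaseOp, mulOp_toLp, restrictL2_mulLp (memLp_exp_I_mul a)]

theorem POM.IsCovariant.compress_restrictL2 {E : POM (Lp ℂ 2 (μ.restrict I))}
    (hE : E.IsCovariant) : (E.compress (restrictL2 μ I) norm_restrictL2_le).IsCovariant := by
  intro a B hB
  refine ContinuousLinearMap.ext fun φ => ext_inner_left ℂ fun ψ => ?_
  simp only [POM.compress, ← hE a B hB, ContinuousLinearMap.comp_apply,
    ContinuousLinearMap.adjoint_inner_right, restrictL2_phaseOp]

end Restriction

/-- Structure theorem for covariant POMs: every POM on the Borel sets of `ℝ`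
with values in the bounded operators on `L²(I)` satisfying the covariance condition
`e^{-iaM} E(B) e^{iaM} = E(B+a)` is of the form `E(B) = Ψ(F χ_B(M) F*)` for a positive linear
map `Ψ` satisfying `Ψ(f(M)* A f(M)) = f(M)* Ψ(A) f(M)` for all bounded Borel `f`. -/
theorem statement4 (I : Set ℝ) (hI : MeasurableSet I)
    (𝓕 : H2 ≃ₗᵢ[ℂ] H2) (h𝓕 : IsFourier 𝓕)
    (E : POM (Lp ℂ 2 (volume.restrict I)))
    (hcov : ∀ (a : ℝ) (B : Set ℝ), MeasurableSet B → ∀ φ : Lp ℂ 2 (volume.restrict I),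
      mulLp (fun x => Complex.exp (-(Complex.I * a * x)))
        (E.toFun B (mulLp (fun x => Complex.exp (Complex.I * a * x)) φ)) =
      E.toFun ((· + a) '' B) φ) :
    ∃ Ψ : (H2 →L[ℂ] H2) → (Lp ℂ 2 (volume.restrict I) →L[ℂ] Lp ℂ 2 (volume.restrict I)),
      (∀ A B : H2 →L[ℂ] H2, Ψ (A + B) = Ψ A + Ψ B) ∧
      (∀ (c : ℂ) (A : H2 →L[ℂ] H2), Ψ (c • A) = c • Ψ A) ∧
      (∀ A : H2 →L[ℂ] H2, A.IsPositive → (Ψ A).IsPositive) ∧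
      (∀ f : ℝ → ℂ, Measurable f → (∃ C : ℝ, ∀ x : ℝ, ‖f x‖ ≤ C) →
        ∀ A Af : H2 →L[ℂ] H2,
          (∀ φ : H2,
            Af φ = mulLp (fun x => starRingEnd ℂ (f x)) (A (mulLp f φ))) →
          ∀ φ : Lp ℂ 2 (volume.restrict I),
            Ψ Af φ = mulLp (fun x => starRingEnd ℂ (f x)) (Ψ A (mulLp f φ))) ∧
      (∀ B : Set ℝ, MeasurableSet B → ∀ A : H2 →L[ℂ] H2,
        (∀ φ : H2, A φ = 𝓕 (mulLp (Set.indicator B fun _ => (1 : ℂ)) (𝓕.symm φ))) →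
        E.toFun B = Ψ A) := by
  have hE : E.IsCovariant := fun a B hB => ContinuousLinearMap.ext fun φ => by
    rw [← hcov a B hB φ, ContinuousLinearMap.comp_apply, ContinuousLinearMap.comp_apply,
      adjoint_phaseOp_apply, phaseOp, mulOp_toLp]
  obtain ⟨Ψ, hΨ, hΨE⟩ := hE.compress_restrictL2.exists_isConjCovariant h𝓕
  let R := restrictL2 volume I
  refine ⟨fun A => R ∘L Ψ A ∘L R†, fun A B => ?_, fun c A => ?_, fun A hA => ?_,
    fun f hf hbdd A Af hAf φ => ?_, fun B hB A hA => ?_⟩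
  · simp only [map_add, ContinuousLinearMap.add_comp, ContinuousLinearMap.comp_add]
  · simp only [map_smul, ContinuousLinearMap.smul_comp, ContinuousLinearMap.comp_smul]
  · exact (hΨ.isPositive_apply A hA).conj_adjoint R
  · obtain ⟨C, hC⟩ := hbdd
    have hf_mem : MemLp f ∞ := memLp_top_of_bound hf.aestronglyMeasurable C (ae_of_all _ hC)
    have hAf_eq : Af = (mulOp (hf_mem.toLp f))† ∘L A ∘L mulOp (hf_mem.toLp f) :=
      ContinuousLinearMap.ext fun ψ => by rw [hAf, adjoint_mulOp_comp_comp_mulOp_apply]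
    simp only [hAf_eq, hΨ.map_conj _ (mem_range_self _), R, restrictL2_conj_mulOp,
      adjoint_mulOp_comp_comp_mulOp_apply]
  · have hA_eq : A = fourierProj 𝓕 hB := ContinuousLinearMap.ext fun φ => by
      rw [hA, fourierProj_apply]
    refine ContinuousLinearMap.ext fun φ => ?_
    simp only [hA_eq, hΨE, POM.compress, ContinuousLinearMap.comp_apply, R,
      restrictL2_adjoint_apply hI]
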